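/- Let (M,d) be a bounded complete NPC space with diam(M) > 0, take Z = M and ℓ(m,z) = d(m,z)². Let Θ = {1,…,K} with uniform prior, let β = 1/(2·diam(M)²), and let m̂_t be the barycenter of Σ_{θ=1}^K π_{θ,t} δ_{m_{θ,t}} where π_{θ,t} = e^{−β L_{θ,t−1}} / Σ_{ϑ=1}^K e^{−β L_{ϑ,t−1}}. Then for every T ≥ 1, uniformly over the outcome sequence and the expert advice, R_T = L̂_T − min_{1≤θ≤K} L_{θ,T} ≤ 2·diam(M)²·ln K. -/

import Mathlib

/-!
The loss at a barycenter `b` of `∑ w_θ δ_{m_θ}` is controlled by the mixture of the exponentiated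
losses of the `m_θ`: `∑ w_θ exp (-β d(m_θ, z)²) ≤ exp (-β d(b, z)²)` for `β = 1 / (2 diam²)`.
No general Jensen inequality for barycenters is needed. Comparing `b` with points of a geodesic from
`b` to `z` near `b` gives the variance inequality `d(b, z)² ≤ ∑ w_θ (d(m_θ, z)² - d(m_θ, b)²)`
(`variance_inequality`). Together with `|d(m_θ, z) - d(b, z)| ≤ d(m_θ, b)` it yields
`d(b, z) ≤ ∑ w_θ d(m_θ, z)` (`dist_barycenter_le`). Since `r ↦ exp (-β r²)` is decreasing and
concave on `[0, 1 / √(2β)]` (`concaveOn_exp_neg_mul_sq`), the scalar Jensen inequality finishes the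
argument (`exp_mixture_le`).

The weights are normalised exponentials, so the one-step bound says that
`W_t = ∑ exp (-β L_{θ,t})` satisfies `W_{t+1} ≤ W_t exp (-β d(m̂_t, z_t)²)`. Telescoping from
`W_0 = K` and bounding `W_T` below by a single term gives the regret bound after taking logarithms.
-/

open MeasureTheory ProbabilityTheory Real

set_option autoImplicit false

noncomputable section

/-- A (constant-speed) geodesic parametrized by `[0,1]`:
`d(γ(s),γ(t)) = (t−s)·d(γ(0),γ(1))` for all `0 ≤ s ≤ t ≤ 1`. -/
def IsGeodesic {M : Type*} [MetricSpace M] (γ : ℝ → M) : Prop :=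
  ∀ s t : ℝ, 0 ≤ s → s ≤ t → t ≤ 1 →
    dist (γ s) (γ t) = (t - s) * dist (γ 0) (γ 1)

/-- A metric space is geodesic if every pair of points is joined by a geodesic. -/
def GeodesicSpace (M : Type*) [MetricSpace M] : Prop :=
  ∀ x y : M, ∃ γ : ℝ → M, IsGeodesic γ ∧ γ 0 = x ∧ γ 1 = y

/-- `f` is geodesically convex if `f ∘ γ` is convex on `[0,1]` for every geodesic `γ`. -/
def GeodesicallyConvex {M : Type*} [MetricSpace M] (f : M → ℝ) : Prop :=
  ∀ γ : ℝ → M, IsGeodesic γ → ConvexOn ℝ (Set.Icc (0 : ℝ) 1) (f ∘ γ)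

/-- `f` is geodesically concave if `−f` is geodesically convex. -/
def GeodesicallyConcave {M : Type*} [MetricSpace M] (f : M → ℝ) : Prop :=
  GeodesicallyConvex (fun x => -f x)

/-- `f` is geodesically `α`-convex if along every geodesic `γ` the function
`t ↦ f(γ(t)) − (α/2)·d(γ(0),γ(1))²·t²` is convex on `[0,1]`. -/
def GeodesicallyAlphaConvex {M : Type*} [MetricSpace M] (α : ℝ) (f : M → ℝ) : Prop :=
  ∀ γ : ℝ → M, IsGeodesic γ →
    ConvexOn ℝ (Set.Icc (0 : ℝ) 1)
      (fun t => f (γ t) - α / 2 * dist (γ 0) (γ 1) ^ 2 * t ^ 2)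

/-- Non-positive curvature comparison inequality for a geodesic space. -/
def NPCSpace (M : Type*) [MetricSpace M] : Prop :=
  GeodesicSpace M ∧
    ∀ (p : M) (γ : ℝ → M), IsGeodesic γ → ∀ t ∈ Set.Icc (0 : ℝ) 1,
      dist p (γ t) ^ 2 ≤
        (1 - t) * dist p (γ 0) ^ 2 + t * dist p (γ 1) ^ 2
          - t * (1 - t) * dist (γ 0) (γ 1) ^ 2

/-- The variance inequality for a barycenter `b` in an NPC space. -/
theorem variance_inequality {M : Type*} [MetricSpace M] (hNPC : NPCSpace M)
    {ι : Type*} [Fintype ι] (w : ι → ℝ) (hw0 : ∀ i, 0 ≤ w i) (hw1 : ∑ i, w i = 1)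
    (p : ι → M) (b z : M)
    (hb : ∀ x, ∑ i, w i * dist b (p i) ^ 2 ≤ ∑ i, w i * dist x (p i) ^ 2) :
    dist b z ^ 2 ≤ ∑ i, w i * (dist (p i) z ^ 2 - dist (p i) b ^ 2) := by
  obtain ⟨γ, hγ, h0, h1⟩ := hNPC.1 b z
  set V := ∑ i, w i * (dist (p i) z ^ 2 - dist (p i) b ^ 2) with hV
  -- averaging the comparison inequality at `γ t` and dividing by `t`
  have key : ∀ t : ℝ, 0 < t → t ≤ 1 → (1 - t) * dist b z ^ 2 ≤ V := by
    intro t ht ht1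
    have hle : ∑ i, w i * dist (γ t) (p i) ^ 2 ≤
        ∑ i, (w i * dist b (p i) ^ 2
          + t * (w i * (dist (p i) z ^ 2 - dist (p i) b ^ 2))
          - t * (1 - t) * dist b z ^ 2 * w i) := by
      refine Finset.sum_le_sum fun i _ => ?_
      have h := hNPC.2 (p i) γ hγ t ⟨ht.le, ht1⟩
      rw [h0, h1] at h
      rw [dist_comm (γ t) (p i), dist_comm b (p i)]
      have := mul_le_mul_of_nonneg_left h (hw0 i)
      linarith
    rw [Finset.sum_sub_distrib, Finset.sum_add_distrib, ← Finset.mul_sum, ← Finset.mul_sum,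
      hw1, ← hV] at hle
    have h2 := (hb (γ t)).trans hle
    have h3 : t * ((1 - t) * dist b z ^ 2) ≤ t * V := by linarith
    exact le_of_mul_le_mul_left h3 ht
  have hlim : Filter.Tendsto (fun t : ℝ => (1 - t) * dist b z ^ 2) (nhdsWithin 0 (Set.Ioi 0))
      (nhds (dist b z ^ 2)) := by
    have hc : Continuous fun t : ℝ => (1 - t) * dist b z ^ 2 := by fun_prop
    simpa using (hc.tendsto 0).mono_left nhdsWithin_le_nhds
  refine le_of_tendsto hlim ?_
  filter_upwards [Ioc_mem_nhdsGT (zero_lt_one' ℝ)] with t ht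
  exact key t ht.1 ht.2

/-- Jensen's inequality at a barycenter for the convex function `dist · z`. -/
theorem dist_barycenter_le {M : Type*} [MetricSpace M] (hNPC : NPCSpace M)
    {ι : Type*} [Fintype ι] (w : ι → ℝ) (hw0 : ∀ i, 0 ≤ w i) (hw1 : ∑ i, w i = 1)
    (p : ι → M) (b z : M)
    (hb : ∀ x, ∑ i, w i * dist b (p i) ^ 2 ≤ ∑ i, w i * dist x (p i) ^ 2) :
    dist b z ≤ ∑ i, w i * dist (p i) z := by
  have hvar := variance_inequality hNPC w hw0 hw1 p b z hb
  rcases (dist_nonneg (x := b) (y := z)).eq_or_lt with h | h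
  · rw [← h]
    exact Finset.sum_nonneg fun i _ => mul_nonneg (hw0 i) dist_nonneg
  · have hle : ∑ i, w i * (dist (p i) z ^ 2 - dist (p i) b ^ 2) ≤
        ∑ i, (2 * dist b z * (w i * dist (p i) z) - dist b z ^ 2 * w i) := by
      refine Finset.sum_le_sum fun i _ => ?_
      have habs : |dist (p i) z - dist b z| ≤ dist (p i) b := abs_dist_sub_le _ _ _
      have hsq : (dist (p i) z - dist b z) ^ 2 ≤ dist (p i) b ^ 2 :=
        sq_le_sq' (by linarith [(abs_le.1 habs).1]) (abs_le.1 habs).2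
      have := mul_le_mul_of_nonneg_left hsq (hw0 i)
      linarith
    rw [Finset.sum_sub_distrib, ← Finset.mul_sum, ← Finset.mul_sum, hw1] at hle
    have h2 : dist b z * dist b z ≤ dist b z * ∑ i, w i * dist (p i) z := by linarith
    exact le_of_mul_le_mul_left h2 h

theorem concaveOn_exp_neg_mul_sq {β D : ℝ} (hβ : 0 ≤ β) (hβD : 2 * β * D ^ 2 ≤ 1) :
    ConcaveOn ℝ (Set.Icc 0 D) fun r : ℝ => Real.exp (-β * r ^ 2) := by
  have hd1 : ∀ r : ℝ, HasDerivAt (fun r : ℝ => Real.exp (-β * r ^ 2))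
      (Real.exp (-β * r ^ 2) * (-β * (2 * r))) r := fun r => by
    simpa using ((hasDerivAt_pow 2 r).const_mul (-β)).exp
  have hd2 : ∀ r : ℝ, HasDerivAt (fun r : ℝ => Real.exp (-β * r ^ 2) * (-β * (2 * r)))
      (Real.exp (-β * r ^ 2) * (-β * (2 * r)) * (-β * (2 * r))
        + Real.exp (-β * r ^ 2) * (-β * (2 * 1))) r := fun r =>
    (hd1 r).mul (((hasDerivAt_id r).const_mul 2).const_mul (-β))
  refine concaveOn_of_hasDerivWithinAt2_nonpos (convex_Icc 0 D)
    (by fun_prop) (fun r _ => (hd1 r).hasDerivWithinAt) (fun r _ => (hd2 r).hasDerivWithinAt) ?_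
  intro r hr
  rw [interior_Icc] at hr
  have hr2 : r ^ 2 ≤ D ^ 2 := pow_le_pow_left₀ hr.1.le hr.2.le 2
  have h1 : 2 * β * r ^ 2 ≤ 1 := (mul_le_mul_of_nonneg_left hr2 (by positivity)).trans hβD
  have h2 : 0 ≤ Real.exp (-β * r ^ 2) * (2 * β) * (1 - 2 * β * r ^ 2) :=
    mul_nonneg (by positivity) (by linarith)
  linarith

/-- The squared distance to `z` is exp-concave at barycenters. -/
theorem exp_mixture_le {M : Type*} [MetricSpace M] (hNPC : NPCSpace M)
    {ι : Type*} [Fintype ι] (w : ι → ℝ) (hw0 : ∀ i, 0 ≤ w i) (hw1 : ∑ i, w i = 1)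
    (p : ι → M) (b z : M)
    (hb : ∀ x, ∑ i, w i * dist b (p i) ^ 2 ≤ ∑ i, w i * dist x (p i) ^ 2)
    {β D : ℝ} (hβ : 0 ≤ β) (hβD : 2 * β * D ^ 2 ≤ 1) (hD : ∀ x y : M, dist x y ≤ D) :
    ∑ i, w i * Real.exp (-β * dist (p i) z ^ 2) ≤ Real.exp (-β * dist b z ^ 2) := by
  have hJ := (concaveOn_exp_neg_mul_sq hβ hβD).le_map_sum (t := Finset.univ) (w := w)
    (p := fun i => dist (p i) z) (fun i _ => hw0 i) hw1
    (fun i _ => ⟨dist_nonneg, hD _ _⟩)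
  simp only [smul_eq_mul] at hJ
  refine hJ.trans (Real.exp_le_exp.2 ?_)
  have hsq := pow_le_pow_left₀ dist_nonneg (dist_barycenter_le hNPC w hw0 hw1 p b z hb) 2
  have := mul_le_mul_of_nonneg_left hsq hβ
  linarith

/-- Regret bound for the generalized EWA forecaster with `K` experts in a bounded
complete NPC space, squared-distance loss `ℓ(m,z) = d(m,z)²`, uniform prior and
`β = 1/(2·diam(M)²)`: for every `T ≥ 1`,
`L̂_T − min_θ L_{θ,T} ≤ 2·diam(M)²·ln K`, stated equivalently as
`L̂_T ≤ L_{θ,T} + 2·diam(M)²·ln K` for every expert `θ` (times indexed by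
`0,…,T−1`). -/
theorem stmt_11 {M : Type*} [MetricSpace M] [CompleteSpace M]
    (hNPC : NPCSpace M)
    (hbdd : Bornology.IsBounded (Set.univ : Set M))
    (hdiam : 0 < Metric.diam (Set.univ : Set M))
    {K : ℕ} (hK : 1 ≤ K)
    (β : ℝ) (hβ : β = 1 / (2 * Metric.diam (Set.univ : Set M) ^ 2))
    (z : ℕ → M) (m : Fin K → ℕ → M)
    (L : Fin K → ℕ → ℝ)
    (hL : ∀ θ t, L θ t = ∑ s ∈ Finset.range t, dist (m θ s) (z s) ^ 2)
    (w : Fin K → ℕ → ℝ)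
    (hw : ∀ θ t, w θ t = Real.exp (-β * L θ t) / ∑ ϑ, Real.exp (-β * L ϑ t))
    (mhat : ℕ → M)
    (hmhat : ∀ t (x : M),
      ∑ θ, w θ t * dist (mhat t) (m θ t) ^ 2 ≤ ∑ θ, w θ t * dist x (m θ t) ^ 2)
    (T : ℕ) (hT : 1 ≤ T) (θ : Fin K) :
    ∑ t ∈ Finset.range T, dist (mhat t) (z t) ^ 2 ≤
      L θ T + 2 * Metric.diam (Set.univ : Set M) ^ 2 * Real.log K := by
  set D := Metric.diam (Set.univ : Set M) with hDdef
  have hD : ∀ x y : M, dist x y ≤ D := fun x y =>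
    Metric.dist_le_diam_of_mem hbdd (Set.mem_univ x) (Set.mem_univ y)
  have hβ0 : 0 < β := by rw [hβ]; positivity
  have hβD : 2 * β * D ^ 2 = 1 := by rw [hβ]; field_simp
  have hWpos : ∀ t, 0 < ∑ ϑ, Real.exp (-β * L ϑ t) := fun t =>
    Finset.sum_pos (fun _ _ => Real.exp_pos _) ⟨θ, Finset.mem_univ _⟩
  have hw0 : ∀ t i, 0 ≤ w i t := fun t i => by
    rw [hw]; exact div_nonneg (Real.exp_pos _).le (hWpos t).le
  have hw1 : ∀ t, ∑ i, w i t = 1 := fun t => by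
    simp only [hw]
    rw [← Finset.sum_div, div_self (hWpos t).ne']
  -- the potential `W t = ∑ exp (-β L θ t)` shrinks at least as fast as the forecaster's loss grows
  have hstep : ∀ t, ∑ ϑ, Real.exp (-β * L ϑ (t + 1)) ≤
      (∑ ϑ, Real.exp (-β * L ϑ t)) * Real.exp (-β * dist (mhat t) (z t) ^ 2) := by
    intro t
    have h := exp_mixture_le hNPC (fun i => w i t) (hw0 t) (hw1 t) (fun i => m i t)
      (mhat t) (z t) (hmhat t) hβ0.le hβD.le hD
    refine le_trans (le_of_eq ?_) (mul_le_mul_of_nonneg_left h (hWpos t).le)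
    rw [Finset.mul_sum]
    refine Finset.sum_congr rfl fun i _ => ?_
    have hLs : L i (t + 1) = L i t + dist (m i t) (z t) ^ 2 := by
      rw [hL, hL, Finset.sum_range_succ]
    have hW := (hWpos t).ne'
    rw [hw, hLs, mul_add, Real.exp_add, ← mul_assoc, mul_div_cancel₀ _ hW]
  have htel : ∀ n, ∑ ϑ, Real.exp (-β * L ϑ n) ≤
      K * Real.exp (-β * ∑ t ∈ Finset.range n, dist (mhat t) (z t) ^ 2) := by
    intro n
    induction n with
    | zero => simp [hL]
    | succ n ih =>
      rw [Finset.sum_range_succ, mul_add, Real.exp_add, ← mul_assoc]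
      exact (hstep n).trans (mul_le_mul_of_nonneg_right ih (Real.exp_pos _).le)
  have hfin : Real.exp (-β * L θ T) ≤
      K * Real.exp (-β * ∑ t ∈ Finset.range T, dist (mhat t) (z t) ^ 2) :=
    (Finset.single_le_sum (f := fun ϑ => Real.exp (-β * L ϑ T))
      (fun _ _ => (Real.exp_pos _).le) (Finset.mem_univ θ)).trans (htel T)
  have hK0 : (0 : ℝ) < K := by exact_mod_cast hK
  have hlog := Real.log_le_log (Real.exp_pos _) hfin
  rw [Real.log_mul hK0.ne' (Real.exp_pos _).ne', Real.log_exp, Real.log_exp] at hlog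
  set S := ∑ t ∈ Finset.range T, dist (mhat t) (z t) ^ 2
  -- multiply `β * S ≤ β * L θ T + log K` by `1 / β = 2 * D ^ 2`
  have hmul : β * S ≤ β * (L θ T + 2 * D ^ 2 * Real.log K) := by
    linear_combination hlog - Real.log K * hβD
  exact le_of_mul_le_mul_left hmul hβ0
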